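/- Suppose the pair (A,B), with A ∈ ℝ^{n×n} and B ∈ ℝ^{n×m}, is stabilizable (there exists K ∈ ℝ^{m×n} such that A − B K is Hurwitz) and A has no eigenvalue on the imaginary axis (no complex eigenvalue with zero real part). Then there exists a symmetric positive semidefinite matrix P_0 ∈ ℝ^{n×n} satisfying the algebraic Riccati equation A^T P_0 + P_0 A − P_0 B B^T P_0 = 0 and such that A − B B^T P_0 is Hurwitz. -/

import Mathlib

open Matrix

/-- A real square matrix is Hurwitz if every eigenvalue of its complexification has strictly
negative real part. -/
def IsHurwitz {n : ℕ} (M : Matrix (Fin n) (Fin n) ℝ) : Prop :=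
  ∀ μ ∈ spectrum ℂ (M.map (algebraMap ℝ ℂ)), μ.re < 0

open Filter Topology

lemma ric_eigC {n : ℕ} (M : Matrix (Fin n) (Fin n) ℂ) (μ : ℂ) :
    μ ∈ spectrum ℂ M ↔ ∃ v : Fin n → ℂ, v ≠ 0 ∧ M *ᵥ v = μ • v := by
  rw [Matrix.mem_spectrum_iff_isRoot_charpoly, Polynomial.IsRoot, Matrix.eval_charpoly,
    ← Matrix.exists_mulVec_eq_zero_iff]
  refine exists_congr fun v => and_congr_right fun _ => ?_
  rw [Matrix.sub_mulVec, sub_eq_zero, eq_comm]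
  have : (Matrix.scalar (Fin n)) μ *ᵥ v = μ • v := by
    ext i
    simp [Matrix.scalar_apply, Matrix.mulVec_diagonal]
  rw [this]

lemma ric_eigR {n : ℕ} (M : Matrix (Fin n) (Fin n) ℝ) (μ : ℂ) :
    μ ∈ spectrum ℂ (M.map (algebraMap ℝ ℂ)) ↔ ∃ x y : Fin n → ℝ, (x ≠ 0 ∨ y ≠ 0) ∧
      M *ᵥ x = μ.re • x - μ.im • y ∧ M *ᵥ y = μ.im • x + μ.re • y := by
  rw [ric_eigC]
  constructor
  · rintro ⟨v, hv, h⟩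
    refine ⟨fun i => (v i).re, fun i => (v i).im, ?_, ?_, ?_⟩
    · by_contra! hc
      apply hv
      ext i
      exact Complex.ext (congrFun hc.1 i) (congrFun hc.2 i)
    · ext i
      have := congrArg Complex.re (congrFun h i)
      simpa [Matrix.mulVec, dotProduct] using this
    · ext i
      have := congrArg Complex.im (congrFun h i)
      simp [Matrix.mulVec, dotProduct] at this ⊢
      linarith
  · rintro ⟨x, y, hxy, h1, h2⟩
    refine ⟨fun i => ⟨x i, y i⟩, ?_, ?_⟩
    · intro hc
      rcases hxy with h | h
      · exact h (funext fun i => congrArg Complex.re (congrFun hc i))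
      · exact h (funext fun i => congrArg Complex.im (congrFun hc i))
    · ext i
      have e1 := congrFun h1 i
      have e2 := congrFun h2 i
      simp [Matrix.mulVec, dotProduct] at e1 e2
      apply Complex.ext
      · simpa [Matrix.mulVec, dotProduct] using e1
      · simp [Matrix.mulVec, dotProduct]
        linarith

section
attribute [local instance] Matrix.linftyOpNormedRing Matrix.linftyOpNormedAlgebra

lemma ric_pow_tendstoC {n : ℕ} (M : Matrix (Fin n) (Fin n) ℂ)
    (h : ∀ μ ∈ spectrum ℂ M, ‖μ‖ < 1) : Tendsto (fun k : ℕ => M ^ k) atTop (𝓝 0) := by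
  rcases Nat.eq_zero_or_pos n with rfl | hn
  · have : (fun k : ℕ => M ^ k) = fun _ => 0 := by
      ext k i; exact i.elim0
    rw [this]; exact tendsto_const_nhds
  have : Nonempty (Fin n) := ⟨⟨0, hn⟩⟩
  have : CompleteSpace (Matrix (Fin n) (Fin n) ℂ) := FiniteDimensional.complete ℂ _
  have hr : spectralRadius ℂ M < (1 : NNReal) := by
    apply spectrum.spectralRadius_lt_of_forall_lt
    intro k hk
    exact_mod_cast h k hk
  have hG := spectrum.pow_nnnorm_pow_one_div_tendsto_nhds_spectralRadius M
  obtain ⟨r, hr1, hr2⟩ := ENNReal.lt_iff_exists_nnreal_btwn.1 hr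
  have hev := hG.eventually (gt_mem_nhds hr1)
  have hr3 : r < 1 := by exact_mod_cast hr2
  have hb : ∀ᶠ k : ℕ in atTop, ‖M ^ k‖ ≤ (r : ℝ) ^ k := by
    filter_upwards [hev, eventually_gt_atTop 0] with k hk hk0
    have hk' : (0 : ℝ) < k := by exact_mod_cast hk0
    have h2 := ENNReal.rpow_le_rpow hk.le hk'.le
    rw [← ENNReal.rpow_mul, one_div, inv_mul_cancel₀ hk'.ne', ENNReal.rpow_one,
      ENNReal.rpow_natCast] at h2
    have h3 : ‖M ^ k‖₊ ≤ r ^ k := by exact_mod_cast h2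
    exact_mod_cast h3
  exact squeeze_zero_norm' hb
    (tendsto_pow_atTop_nhds_zero_of_lt_one r.2 (by exact_mod_cast hr3))
end

lemma ric_pow_tendsto {n : ℕ} (M : Matrix (Fin n) (Fin n) ℝ)
    (h : ∀ μ ∈ spectrum ℂ (M.map (algebraMap ℝ ℂ)), ‖μ‖ < 1) :
    Tendsto (fun k : ℕ => M ^ k) atTop (𝓝 0) := by
  have h1 := ric_pow_tendstoC _ h
  have h2 : Continuous fun X : Matrix (Fin n) (Fin n) ℂ => X.map Complex.re :=
    Continuous.matrix_map continuous_id Complex.continuous_re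
  have h3 := (h2.tendsto 0).comp h1
  have e : (fun X : Matrix (Fin n) (Fin n) ℂ => X.map Complex.re) ∘
      (fun k : ℕ => (M.map (algebraMap ℝ ℂ)) ^ k) = fun k => M ^ k := by
    funext k
    have : (M.map (algebraMap ℝ ℂ)) ^ k = (M ^ k).map (algebraMap ℝ ℂ) :=
      (map_pow (algebraMap ℝ ℂ).mapMatrix M k).symm
    simp only [Function.comp, this]
    ext i j
    simp
  rw [e] at h3
  convert h3 using 2
  ext i j
  simp

/-- Cayley transform. -/
lemma ric_cayley {n : ℕ} (A : Matrix (Fin n) (Fin n) ℝ) (hA : IsHurwitz A) :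
    IsUnit (A - 1).det ∧
      Tendsto (fun k : ℕ => ((A + 1) * (A - 1)⁻¹) ^ k) atTop (𝓝 0) := by
  have hu : IsUnit (A - 1).det := by
    rw [isUnit_iff_ne_zero]
    intro h0
    obtain ⟨v, hv, h⟩ := Matrix.exists_mulVec_eq_zero_iff.2 h0
    rw [Matrix.sub_mulVec, sub_eq_zero, Matrix.one_mulVec] at h
    have := hA 1 ((ric_eigR A 1).2 ⟨v, 0, Or.inl hv, by simp [h], by simp⟩)
    norm_num at this
  refine ⟨hu, ric_pow_tendsto _ ?_⟩
  intro μ hμ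
  obtain ⟨w, hw, h⟩ := (ric_eigC _ _).1 hμ
  set f := (algebraMap ℝ ℂ).mapMatrix (m := Fin n) with hf
  have hm : ((A + 1) * (A - 1)⁻¹).map (algebraMap ℝ ℂ) = (f A + 1) * f (A - 1)⁻¹ := by
    rw [← map_one f, ← map_add, ← map_mul]; rfl
  have hN : (f A - 1) * f (A - 1)⁻¹ = 1 := by
    rw [← map_one f, ← map_sub, ← map_mul, Matrix.mul_nonsing_inv _ hu]
  rw [hm, ← Matrix.mulVec_mulVec] at h
  set v := f (A - 1)⁻¹ *ᵥ w with hv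
  have hwv : w = f A *ᵥ v - v := by
    have : (f A - 1) *ᵥ v = w := by rw [hv, Matrix.mulVec_mulVec, hN, Matrix.one_mulVec]
    rw [← this, Matrix.sub_mulVec, Matrix.one_mulVec]
  have hv0 : v ≠ 0 := by
    intro h0; apply hw; rw [hwv, h0]; simp
  rw [Matrix.add_mulVec, Matrix.one_mulVec, hwv] at h
  have h5 : ∀ i, (μ - 1) * (f A *ᵥ v) i = (μ + 1) * v i := by
    intro i
    have := congrFun h i
    simp at this
    linear_combination -this
  have hμ1 : μ - 1 ≠ 0 := by
    intro h0
    apply hv0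
    ext i
    have h6 := h5 i
    have : μ = 1 := by linear_combination h0
    rw [this] at h6
    norm_num at h6
    simpa using h6
  have h7 := hA ((μ + 1) / (μ - 1)) ((ric_eigC _ _).2 ⟨v, hv0, by
    ext i
    change (f A *ᵥ v) i = _
    simp only [Pi.smul_apply, smul_eq_mul]
    field_simp
    linear_combination h5 i⟩)
  have hs : 0 < Complex.normSq (μ - 1) := Complex.normSq_pos.2 hμ1
  rw [Complex.div_re, ← add_div, div_neg_iff] at h7
  rcases h7 with h7 | h7
  · linarith [h7.2]
  · have := h7.1
    simp at this
    have h8 : ‖μ‖ ^ 2 < 1 := by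
      rw [← Complex.normSq_eq_norm_sq, Complex.normSq_apply]; nlinarith
    nlinarith [norm_nonneg μ]

lemma ric_lyap_ineq {n : ℕ} (A X : Matrix (Fin n) (Fin n) ℝ) (hA : IsHurwitz A)
    (hX : ∀ v, v ⬝ᵥ ((Aᵀ * X + X * A) *ᵥ v) ≤ 0) (v : Fin n → ℝ) : 0 ≤ v ⬝ᵥ (X *ᵥ v) := by
  obtain ⟨hu, ht⟩ := ric_cayley A hA
  set M := (A + 1) * (A - 1)⁻¹ with hM
  have hMN : M * (A - 1) = A + 1 := by
    rw [hM, Matrix.mul_assoc, Matrix.nonsing_inv_mul _ hu, Matrix.mul_one]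
  have key : ∀ w, (M *ᵥ w) ⬝ᵥ (X *ᵥ (M *ᵥ w)) ≤ w ⬝ᵥ (X *ᵥ w) := by
    intro w
    set u := (A - 1)⁻¹ *ᵥ w with hu'
    have hw : w = A *ᵥ u - u := by
      have : (A - 1) *ᵥ u = w := by
        rw [hu', Matrix.mulVec_mulVec, Matrix.mul_nonsing_inv _ hu, Matrix.one_mulVec]
      rw [← this, Matrix.sub_mulVec, Matrix.one_mulVec]
    have hMw : M *ᵥ w = A *ᵥ u + u := by
      rw [hM, ← Matrix.mulVec_mulVec, ← hu', Matrix.add_mulVec, Matrix.one_mulVec]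
    have h := hX u
    have e : u ⬝ᵥ ((Aᵀ * X + X * A) *ᵥ u) = (A *ᵥ u) ⬝ᵥ (X *ᵥ u) + u ⬝ᵥ (X *ᵥ (A *ᵥ u)) := by
      rw [Matrix.add_mulVec, dotProduct_add, ← Matrix.mulVec_mulVec, ← Matrix.mulVec_mulVec,
        Matrix.dotProduct_mulVec u Aᵀ, Matrix.vecMul_transpose]
    rw [e] at h
    rw [hMw, hw]
    simp only [Matrix.mulVec_add, Matrix.mulVec_sub, dotProduct_add, dotProduct_sub,
      add_dotProduct, sub_dotProduct]
    linarith
  have hk : ∀ k : ℕ, ((M ^ k) *ᵥ v) ⬝ᵥ (X *ᵥ ((M ^ k) *ᵥ v)) ≤ v ⬝ᵥ (X *ᵥ v) := by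
    intro k
    induction k with
    | zero => simp
    | succ k ih =>
      rw [pow_succ', ← Matrix.mulVec_mulVec]
      exact (key _).trans ih
  have hc : Continuous fun Y : Matrix (Fin n) (Fin n) ℝ => (Y *ᵥ v) ⬝ᵥ (X *ᵥ (Y *ᵥ v)) := by
    fun_prop
  have hl := (hc.tendsto 0).comp ht
  simp only [Matrix.zero_mulVec, zero_dotProduct] at hl
  exact le_of_tendsto' hl hk

lemma ric_lyap_inj {n : ℕ} (A X : Matrix (Fin n) (Fin n) ℝ) (hA : IsHurwitz A)
    (hX : Aᵀ * X + X * A = 0) : X = 0 := by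
  obtain ⟨hu, ht⟩ := ric_cayley A hA
  set M := (A + 1) * (A - 1)⁻¹ with hM
  have key : Mᵀ * X * M = X := by
    have h1 : (A + 1)ᵀ * X * (A + 1) = (A - 1)ᵀ * X * (A - 1) := by
      simp only [Matrix.transpose_add, Matrix.transpose_sub, Matrix.transpose_one]
      have : (Aᵀ + 1) * X * (A + 1) - (Aᵀ - 1) * X * (A - 1) = 2 • (Aᵀ * X + X * A) := by
        noncomm_ring
      rw [hX, smul_zero] at this
      exact sub_eq_zero.1 this
    have hu2 : IsUnit (A - 1)ᵀ.det := by rwa [Matrix.det_transpose]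
    calc Mᵀ * X * M = ((A - 1)ᵀ)⁻¹ * ((A + 1)ᵀ * X * (A + 1)) * (A - 1)⁻¹ := by
          rw [hM, Matrix.transpose_mul, Matrix.transpose_nonsing_inv]
          simp only [Matrix.mul_assoc]
      _ = (((A - 1)ᵀ)⁻¹ * (A - 1)ᵀ) * X * ((A - 1) * (A - 1)⁻¹) := by
          rw [h1]; simp only [Matrix.mul_assoc]
      _ = X := by
          rw [Matrix.nonsing_inv_mul _ hu2, Matrix.mul_nonsing_inv _ hu]; simp
  have hk : ∀ k : ℕ, (M ^ k)ᵀ * X * M ^ k = X := by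
    intro k
    induction k with
    | zero => simp
    | succ k ih =>
      calc (M ^ (k+1))ᵀ * X * M ^ (k+1) = (M ^ k)ᵀ * (Mᵀ * X * M) * M ^ k := by
            rw [pow_succ', Matrix.transpose_mul]; simp only [Matrix.mul_assoc]
        _ = X := by rw [key, ih]
  have hc : Continuous fun Y : Matrix (Fin n) (Fin n) ℝ => Yᵀ * X * Y := by
    fun_prop
  have hl := (hc.tendsto 0).comp ht
  simp only [Matrix.mul_zero] at hl
  have : ((fun Y : Matrix (Fin n) (Fin n) ℝ => Yᵀ * X * Y) ∘ fun k : ℕ => M ^ k) = fun _ => X :=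
    funext hk
  rw [this] at hl
  exact tendsto_nhds_unique tendsto_const_nhds hl

lemma ric_lyap_exists {n : ℕ} (A Q : Matrix (Fin n) (Fin n) ℝ) (hA : IsHurwitz A)
    (hQ : Q.PosSemidef) : ∃ X : Matrix (Fin n) (Fin n) ℝ, X.PosSemidef ∧ Aᵀ * X + X * A = -Q := by
  let L : Matrix (Fin n) (Fin n) ℝ →ₗ[ℝ] Matrix (Fin n) (Fin n) ℝ :=
    LinearMap.mulLeft ℝ Aᵀ + LinearMap.mulRight ℝ A
  have hL : ∀ X, L X = Aᵀ * X + X * A := fun X => rfl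
  have hinj : Function.Injective L := by
    rw [injective_iff_map_eq_zero]
    intro X hX
    exact ric_lyap_inj A X hA hX
  obtain ⟨X, hX⟩ := LinearMap.injective_iff_surjective.1 hinj (-Q)
  rw [hL] at hX
  have hQt : Qᵀ = Q := by simpa using hQ.isHermitian.eq
  refine ⟨X, Matrix.PosSemidef.of_dotProduct_mulVec_nonneg ?_ ?_, hX⟩
  · have : Xᵀ = X := by
      apply hinj
      rw [hL, hL, hX]
      have := congrArg Matrix.transpose hX
      simp only [Matrix.transpose_add, Matrix.transpose_mul, Matrix.transpose_neg, hQt,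
        Matrix.transpose_transpose] at this
      rw [← this, add_comm]
    simpa [Matrix.IsHermitian] using this
  · intro v
    have := ric_lyap_ineq A X hA (fun v => by
      rw [hX, Matrix.neg_mulVec, dotProduct_neg]
      have := hQ.dotProduct_mulVec_nonneg v
      simp at this
      linarith) v
    simpa using this

lemma ric_psd_nonneg {n : ℕ} {X : Matrix (Fin n) (Fin n) ℝ} (hX : X.PosSemidef)
    (v : Fin n → ℝ) : 0 ≤ v ⬝ᵥ (X *ᵥ v) := by
  simpa using hX.dotProduct_mulVec_nonneg v

lemma ric_psd_gram {n m : ℕ} (G : Matrix (Fin m) (Fin n) ℝ) : (Gᵀ * G).PosSemidef := by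
  simpa using Matrix.posSemidef_conjTranspose_mul_self G

lemma ric_symm {n : ℕ} {X : Matrix (Fin n) (Fin n) ℝ} (hX : X.PosSemidef) : Xᵀ = X := by
  simpa using hX.isHermitian.eq

/-- If `MᵀP + PM = -Q - GᵀG`, an eigenvector with nonnegative real part is killed by `G`. -/
lemma ric_kill {n m : ℕ} (M P Q : Matrix (Fin n) (Fin n) ℝ) (G : Matrix (Fin m) (Fin n) ℝ)
    (hP : P.PosSemidef) (hQ : Q.PosSemidef) (h : Mᵀ * P + P * M = -Q - Gᵀ * G)
    (a b : ℝ) (x y : Fin n → ℝ) (ha : 0 ≤ a)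
    (hx : M *ᵥ x = a • x - b • y) (hy : M *ᵥ y = b • x + a • y) :
    G *ᵥ x = 0 ∧ G *ᵥ y = 0 := by
  have sym : ∀ u w : Fin n → ℝ, u ⬝ᵥ (P *ᵥ w) = w ⬝ᵥ (P *ᵥ u) := by
    intro u w
    rw [Matrix.dotProduct_mulVec, ← Matrix.mulVec_transpose, ric_symm hP, dotProduct_comm]
  have e : ∀ u : Fin n → ℝ, 2 * (u ⬝ᵥ (P *ᵥ (M *ᵥ u))) =
      - (u ⬝ᵥ (Q *ᵥ u)) - (G *ᵥ u) ⬝ᵥ (G *ᵥ u) := by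
    intro u
    have h1 := congrArg (fun Z => u ⬝ᵥ (Z *ᵥ u)) h
    simp only [Matrix.add_mulVec, Matrix.sub_mulVec, Matrix.neg_mulVec, dotProduct_add,
      dotProduct_sub, dotProduct_neg, ← Matrix.mulVec_mulVec] at h1
    rw [Matrix.dotProduct_mulVec u Mᵀ, Matrix.vecMul_transpose,
      Matrix.dotProduct_mulVec u Gᵀ, Matrix.vecMul_transpose, sym (M *ᵥ u) u] at h1
    linarith
  have ex := e x
  have ey := e y
  rw [hx] at ex
  rw [hy] at ey
  simp only [Matrix.mulVec_add, Matrix.mulVec_sub, Matrix.mulVec_smul, dotProduct_add,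
    dotProduct_sub, dotProduct_smul, smul_eq_mul] at ex ey
  rw [sym y x] at ey
  have p1 := mul_nonneg ha (ric_psd_nonneg hP x)
  have p2 := mul_nonneg ha (ric_psd_nonneg hP y)
  have q1 := ric_psd_nonneg hQ x
  have q2 := ric_psd_nonneg hQ y
  have g1 : 0 ≤ (G *ᵥ x) ⬝ᵥ (G *ᵥ x) := by
    simpa using dotProduct_star_self_nonneg (G *ᵥ x)
  have g2 : 0 ≤ (G *ᵥ y) ⬝ᵥ (G *ᵥ y) := by
    simpa using dotProduct_star_self_nonneg (G *ᵥ y)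
  constructor
  · apply dotProduct_self_eq_zero.1; linarith
  · apply dotProduct_self_eq_zero.1; linarith

lemma ric_det_lower {n : ℕ} (M : Matrix (Fin n) (Fin n) ℝ) (hM : IsHurwitz M) (z : ℂ)
    (hz : 0 < z.re) :
    z.re ^ n ≤ ‖(Matrix.scalar (Fin n) z - M.map (algebraMap ℝ ℂ)).det‖ := by
  rw [← Matrix.eval_charpoly]
  set C := M.map (algebraMap ℝ ℂ) with hC
  have hs := (IsAlgClosed.splits C.charpoly)
  have hcard : C.charpoly.roots.card = n := by
    rw [← hs.natDegree_eq_card_roots, Matrix.charpoly_natDegree_eq_dim, Fintype.card_fin]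
  have hroots : ∀ r ∈ C.charpoly.roots, r.re < 0 := by
    intro r hr
    apply hM
    rw [Matrix.mem_spectrum_iff_isRoot_charpoly]
    exact Polynomial.isRoot_of_mem_roots hr
  rw [hs.eq_prod_roots_of_monic (Matrix.charpoly_monic C), Polynomial.eval_multiset_prod,
    Multiset.map_map]
  have hpow : z.re ^ n = z.re ^ C.charpoly.roots.card := by rw [hcard]
  rw [hpow]
  clear hpow hcard
  generalize C.charpoly.roots = s at hroots
  induction s using Multiset.induction_on with
  | empty => simp
  | cons r s ih =>
    rw [Multiset.map_cons, Multiset.prod_cons, Multiset.card_cons, pow_succ', norm_mul]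
    have h1 : z.re ≤ ‖z - r‖ := by
      have := Complex.re_le_norm (z - r)
      have h2 := hroots r (Multiset.mem_cons_self r s)
      simp at this
      linarith
    refine mul_le_mul (by simpa using h1) (ih fun r hr => hroots r (Multiset.mem_cons_of_mem hr))
      (by positivity) (by positivity)

/-- One Kleinman step. -/
lemma ric_step {n m : ℕ} (A : Matrix (Fin n) (Fin n) ℝ) (B : Matrix (Fin n) (Fin m) ℝ)
    (K : Matrix (Fin m) (Fin n) ℝ) (hK : IsHurwitz (A - B * K)) :
    ∃ P : Matrix (Fin n) (Fin n) ℝ, P.PosSemidef ∧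
      (A - B * K)ᵀ * P + P * (A - B * K) = -(Kᵀ * K) ∧
      (-(Aᵀ * P + P * A - P * B * Bᵀ * P)).PosSemidef ∧ IsHurwitz (A - B * Bᵀ * P) := by
  obtain ⟨P, hP, h⟩ := ric_lyap_exists (A - B * K) (Kᵀ * K) hK (ric_psd_gram K)
  have hPt := ric_symm hP
  set D := K - Bᵀ * P with hD
  have hDt : Dᵀ = Kᵀ - P * B := by
    rw [hD, Matrix.transpose_sub, Matrix.transpose_mul, hPt, Matrix.transpose_transpose]
  have hR : Aᵀ * P + P * A - P * B * Bᵀ * P = -(Dᵀ * D) := by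
    rw [hDt, hD]
    simp only [Matrix.transpose_sub, Matrix.transpose_mul, Matrix.sub_mul, Matrix.mul_sub,
      Matrix.mul_assoc] at h ⊢
    have h' := sub_eq_zero.2 h
    rw [← sub_eq_zero, ← h']
    abel
  have hL : (A - B * Bᵀ * P)ᵀ * P + P * (A - B * Bᵀ * P) =
      -(Dᵀ * D) - (Bᵀ * P)ᵀ * (Bᵀ * P) := by
    rw [← hR]
    simp only [Matrix.transpose_sub, Matrix.transpose_mul, Matrix.sub_mul, Matrix.mul_sub,
      Matrix.mul_assoc, hPt, Matrix.transpose_transpose]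
    abel
  refine ⟨P, hP, h, ?_, ?_⟩
  · rw [hR, neg_neg]; exact ric_psd_gram D
  · intro μ hμ
    by_contra! hneg
    obtain ⟨x, y, hxy, hx, hy⟩ := (ric_eigR _ _).1 hμ
    have k1 := ric_kill _ P _ (Bᵀ * P) hP (ric_psd_gram D) hL _ _ x y hneg hx hy
    have k2 := ric_kill _ P _ D hP (ric_psd_gram (Bᵀ * P)) (by rw [hL]; abel) _ _ x y hneg hx hy
    have e : ∀ u, (Bᵀ * P) *ᵥ u = 0 → D *ᵥ u = 0 →
        (A - B * K) *ᵥ u = (A - B * Bᵀ * P) *ᵥ u := by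
      intro u h1 h2
      rw [hD, Matrix.sub_mulVec, h1, sub_zero] at h2
      rw [Matrix.sub_mulVec, Matrix.sub_mulVec, Matrix.mul_assoc, ← Matrix.mulVec_mulVec,
        ← Matrix.mulVec_mulVec, h1, h2]
    have := hK μ ((ric_eigR _ _).2 ⟨x, y, hxy, by rw [e x k1.1 k2.1, hx],
      by rw [e y k1.2 k2.2, hy]⟩)
    linarith

lemma ric_entry_bound {n : ℕ} {P : Matrix (Fin n) (Fin n) ℝ} (hP : P.PosSemidef)
    (i j : Fin n) : |P i j| ≤ P.trace := by
  have hd : ∀ k, P k k ≤ P.trace := fun k =>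
    Finset.single_le_sum (f := fun k => P k k) (fun k _ => hP.diag_nonneg) (Finset.mem_univ k)
  have hs : P j i = P i j := congrFun (congrFun (ric_symm hP) i) j
  have h1 := ric_psd_nonneg hP (Pi.single i 1 + Pi.single j 1)
  have h2 := ric_psd_nonneg hP (Pi.single i 1 - Pi.single j 1)
  simp [Matrix.mulVec_add, Matrix.mulVec_sub] at h1 h2
  have := hd i
  have := hd j
  rw [abs_le]
  constructor <;> linarith

lemma ric_closed_psd {n : ℕ} : IsClosed {P : Matrix (Fin n) (Fin n) ℝ | P.PosSemidef} := by
  have : {P : Matrix (Fin n) (Fin n) ℝ | P.PosSemidef} =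
      {P | Pᵀ = P} ∩ ⋂ v : Fin n → ℝ, {P | 0 ≤ v ⬝ᵥ (P *ᵥ v)} := by
    ext P
    simp only [Set.mem_setOf_eq, Set.mem_inter_iff, Set.mem_iInter,
      Matrix.posSemidef_iff_dotProduct_mulVec, Matrix.IsHermitian]
    simp
  rw [this]
  refine (isClosed_eq (by fun_prop) (by fun_prop)).inter (isClosed_iInter fun v => ?_)
  exact isClosed_le (by fun_prop) (by fun_prop)

/-- If `(A, B)` is stabilizable and `A` has no eigenvalue on the imaginary
axis, then there exists a symmetric positive semidefinite `P₀` solving the algebraic Riccati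
equation `Aᵀ P₀ + P₀ A − P₀ B Bᵀ P₀ = 0` with `A − B Bᵀ P₀` Hurwitz. -/
theorem algebraic_riccati_stabilizing_solution {n m : ℕ}
    (A : Matrix (Fin n) (Fin n) ℝ) (B : Matrix (Fin n) (Fin m) ℝ)
    (hstab : ∃ K : Matrix (Fin m) (Fin n) ℝ, IsHurwitz (A - B * K))
    (himag : ∀ μ ∈ spectrum ℂ (A.map (algebraMap ℝ ℂ)), μ.re ≠ 0) :
    ∃ P₀ : Matrix (Fin n) (Fin n) ℝ, P₀.PosSemidef ∧
      Aᵀ * P₀ + P₀ * A - P₀ * B * Bᵀ * P₀ = 0 ∧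
      IsHurwitz (A - B * Bᵀ * P₀) := by
  obtain ⟨K, hK⟩ := hstab
  obtain ⟨P1, hP1, -, hR1, hH1⟩ := ric_step A B K hK
  -- the feasible set
  let S : Set (Matrix (Fin n) (Fin n) ℝ) := {P | P.PosSemidef} ∩
    {P | (-(Aᵀ * P + P * A - P * B * Bᵀ * P)).PosSemidef} ∩
    ⋂ z : ℂ, ⋂ _ : 0 < z.re, {P | z.re ^ n ≤
      ‖(Matrix.scalar (Fin n) z - (A - B * Bᵀ * P).map (algebraMap ℝ ℂ)).det‖}
  have hSmem : ∀ P : Matrix (Fin n) (Fin n) ℝ, P.PosSemidef →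
      (-(Aᵀ * P + P * A - P * B * Bᵀ * P)).PosSemidef → IsHurwitz (A - B * Bᵀ * P) → P ∈ S := by
    intro P h1 h2 h3
    refine ⟨⟨h1, h2⟩, ?_⟩
    simp only [Set.mem_iInter]
    exact fun z hz => ric_det_lower _ h3 z hz
  have hSclosed : IsClosed S := by
    refine (ric_closed_psd.inter (ric_closed_psd.preimage (by fun_prop))).inter
      (isClosed_iInter fun z => isClosed_iInter fun _ => ?_)
    refine isClosed_le continuous_const (Continuous.norm (Continuous.matrix_det ?_))
    refine continuous_const.sub (Continuous.matrix_map (by fun_prop) Complex.continuous_ofReal)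
  have hSH : ∀ P ∈ S, IsHurwitz (A - B * Bᵀ * P) := by
    rintro P ⟨⟨h1, h2⟩, h3⟩ μ hμ
    simp only [Set.mem_iInter] at h3
    by_contra! hneg
    rcases hneg.lt_or_eq with hpos | hzero
    · have h4 := h3 μ hpos
      have h5 := Matrix.mem_spectrum_iff_isRoot_charpoly.1 hμ
      rw [Polynomial.IsRoot, Matrix.eval_charpoly] at h5
      rw [Set.mem_setOf_eq, h5, norm_zero] at h4
      exact absurd h4 (not_le.2 (pow_pos hpos n))
    · obtain ⟨x, y, hxy, hx, hy⟩ := (ric_eigR _ _).1 hμ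
      have hPt := ric_symm h1
      have k1 := ric_kill _ P _ (Bᵀ * P) h1 h2 (by
        simp only [Matrix.transpose_sub, Matrix.transpose_mul, Matrix.sub_mul, Matrix.mul_sub,
          Matrix.mul_assoc, hPt, Matrix.transpose_transpose]
        abel) _ _ x y hneg hx hy
      have e : ∀ u, (Bᵀ * P) *ᵥ u = 0 → A *ᵥ u = (A - B * Bᵀ * P) *ᵥ u := by
        intro u h1
        rw [Matrix.sub_mulVec, Matrix.mul_assoc, ← Matrix.mulVec_mulVec, h1]
        simp
      exact himag μ ((ric_eigR _ _).2 ⟨x, y, hxy, by rw [e x k1.1, hx],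
        by rw [e y k1.2, hy]⟩) hzero.symm
  -- minimize the trace
  let T : Set (Matrix (Fin n) (Fin n) ℝ) := S ∩ {P | P.trace ≤ P1.trace}
  have hTc : IsCompact T := by
    have hbox : IsCompact (Set.univ.pi fun _ : Fin n => Set.univ.pi fun _ : Fin n =>
        Set.Icc (-P1.trace) P1.trace) :=
      isCompact_univ_pi fun _ => isCompact_univ_pi fun _ => isCompact_Icc
    refine IsCompact.of_isClosed_subset hbox
      (hSclosed.inter (isClosed_le (by fun_prop) continuous_const)) ?_
    rintro P ⟨hP, ht⟩
    intro i _ j _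
    have := ric_entry_bound hP.1.1 i j
    exact abs_le.1 (this.trans ht)
  obtain ⟨P, hPT, hmin⟩ := hTc.exists_isMinOn ⟨P1, hSmem P1 hP1 hR1 hH1, le_refl P1.trace⟩
    (f := Matrix.trace) (by fun_prop)
  have hPS := hPT.1
  have hH := hSH P hPS
  have hPt := ric_symm hPS.1.1
  refine ⟨P, hPS.1.1, ?_, hH⟩
  obtain ⟨P', hP', hE, hR', hH'⟩ := ric_step A B (Bᵀ * P) (by rwa [← Matrix.mul_assoc])
  have hD : (A - B * Bᵀ * P)ᵀ * (P - P') + (P - P') * (A - B * Bᵀ * P) =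
      Aᵀ * P + P * A - P * B * Bᵀ * P := by
    have h' := sub_eq_zero.2 hE
    rw [← sub_eq_zero, ← neg_eq_zero, ← h']
    simp only [Matrix.transpose_sub, Matrix.transpose_mul, Matrix.sub_mul, Matrix.mul_sub,
          Matrix.mul_assoc, hPt, Matrix.transpose_transpose]
    abel
  have hDpsd : (P - P').PosSemidef := by
    refine Matrix.PosSemidef.of_dotProduct_mulVec_nonneg
      (hPS.1.1.isHermitian.sub hP'.isHermitian) fun v => ?_
    have := ric_lyap_ineq _ (P - P') hH (fun v => by
      rw [hD]
      have := ric_psd_nonneg hPS.1.2 v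
      rw [Matrix.neg_mulVec, dotProduct_neg] at this
      linarith) v
    simpa using this
  have ht0 := hDpsd.trace_nonneg
  rw [Matrix.trace_sub] at ht0
  have hPtr : P.trace ≤ P1.trace := hPT.2
  have hP'T : P' ∈ T := ⟨hSmem P' hP' hR' (by simpa [Matrix.mul_assoc] using hH'), by
    change P'.trace ≤ P1.trace
    linarith⟩
  have hle : P.trace ≤ P'.trace := hmin hP'T
  have hz : P - P' = 0 := hDpsd.trace_eq_zero_iff.1 (by rw [Matrix.trace_sub]; linarith)
  rw [← hD, hz]
  simp
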